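/- Let k ≥ 2 be an integer. For any fixed x ≥ 2 and T ≥ 1, the integral of (ζ(s−1)/ζ(s))·x^s/s^k over the straight-line segment from −(2M+1) − iT to −(2M+1) + iT tends to 0 as M tends to infinity through the nonnegative integers. -/

import Mathlib

open Complex Filter Topology intervalIntegral

noncomputable section

/-!
For `s` on the line `re s = -(2 * M + 1)`, put `w = 1 - s`. Applied to both zeta values, the
functional equation gives
`ζ(s - 1) / ζ(s) = -(w / 2π) * tan(πw / 2) * ζ(w + 1) / ζ(w)`.
Since `re w` is an even integer, `πw / 2` lies on a vertical line through an integer multiple of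
`π`, where `|tan| ≤ 1`; the quotient of zeta values on the right is at most `5 < 2π` because
`|ζ - 1| ≤ ζ(2) - 1` for `re w ≥ 2`. So `ζ(s - 1) / ζ(s)` grows at most linearly in `M`, whereas
`|x ^ s| = x ^ (-(2 * M + 1))` decays exponentially as soon as `x > 1`.
-/

open scoped Real

lemma hasSum_riemannZeta_sub_one {w : ℂ} (hw : 1 < w.re) :
    HasSum (fun n : ℕ => 1 / ((n + 2 : ℕ) : ℂ) ^ w) (riemannZeta w - 1) := by
  have hw0 : w ≠ 0 := by rintro rfl; norm_num at hw
  have hsum := (Complex.summable_one_div_nat_cpow.mpr hw).hasSum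
  rw [← zeta_eq_tsum_one_div_nat_cpow hw] at hsum
  simpa [Finset.sum_range_succ, zero_cpow hw0] using (hasSum_nat_add_iff' 2).mpr hsum

lemma norm_riemannZeta_sub_one_le {σ : ℝ} {w : ℂ} (hσ : 1 < σ) (hw : σ ≤ w.re) :
    ‖riemannZeta w - 1‖ ≤ (riemannZeta σ).re - 1 := by
  have hsum := Complex.hasSum_re (hasSum_riemannZeta_sub_one (w := σ) (by simpa using hσ))
  refine (hasSum_riemannZeta_sub_one (hσ.trans_le hw)).norm_le_of_bounded hsum fun n => ?_
  have hbase : (1 : ℝ) ≤ (n + 2 : ℕ) := by exact_mod_cast Nat.le_add_left 1 (n + 1)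
  have hre : (1 / ((n + 2 : ℕ) : ℂ) ^ (σ : ℂ)).re = 1 / ((n + 2 : ℕ) : ℝ) ^ σ := by
    rw [← ofReal_natCast, ← ofReal_cpow (by positivity)]
    exact_mod_cast ofReal_re (1 / ((n + 2 : ℕ) : ℝ) ^ σ)
  rw [hre, norm_div, norm_one, norm_natCast_cpow_of_pos (by positivity)]
  gcongr

lemma norm_riemannZeta_sub_one_le_of_two_le_re {w : ℂ} (hw : 2 ≤ w.re) :
    ‖riemannZeta w - 1‖ ≤ π ^ 2 / 6 - 1 := by
  have hre : (riemannZeta (2 : ℝ)).re = π ^ 2 / 6 := by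
    rw [ofReal_ofNat, riemannZeta_two]
    norm_cast
  simpa only [hre] using norm_riemannZeta_sub_one_le one_lt_two hw

lemma norm_riemannZeta_div_riemannZeta_le {v w : ℂ} (hv : 2 ≤ v.re) (hw : 2 ≤ w.re) :
    ‖riemannZeta v / riemannZeta w‖ ≤ 5 := by
  have hpi : π ^ 2 / 6 - 1 ≤ 2 / 3 := by nlinarith [Real.pi_lt_d2, Real.pi_pos]
  have hnum : ‖riemannZeta v‖ ≤ 1 + 2 / 3 := by
    have := norm_le_norm_add_norm_sub' (riemannZeta v) 1
    rw [norm_one] at this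
    linarith [norm_riemannZeta_sub_one_le_of_two_le_re hv]
  have hden : 1 - 2 / 3 ≤ ‖riemannZeta w‖ := by
    have := norm_le_norm_add_norm_sub (riemannZeta w) 1
    rw [norm_one] at this
    linarith [norm_riemannZeta_sub_one_le_of_two_le_re hw]
  rw [norm_div, div_le_iff₀ (by linarith)]
  linarith

lemma riemannZeta_neg {w : ℂ} (hw : ∀ n : ℕ, w ≠ -n) :
    riemannZeta (-w) =
      -(2 * (2 * π) ^ (-w) / (2 * π) * w * Gamma w * sin (π * w / 2) * riemannZeta (w + 1)) := by
  have hw0 : w ≠ 0 := by simpa using hw 0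
  have hsucc (n : ℕ) : w + 1 ≠ -n := fun h => hw (n + 1) (by push_cast; linear_combination h)
  have hpi : (2 * π : ℂ) ≠ 0 := by simp [Real.pi_ne_zero]
  have hcos : cos (π * (w + 1) / 2) = -sin (π * w / 2) := by
    rw [← Complex.cos_add_pi_div_two, mul_add_one, add_div]
  have hcpow : (2 * π : ℂ) ^ (-(w + 1)) = (2 * π) ^ (-w) / (2 * π) := by
    rw [neg_add', cpow_sub _ _ hpi, cpow_one]
  calc riemannZeta (-w) = riemannZeta (1 - (w + 1)) := by rw [sub_add_cancel_right]
    _ = 2 * (2 * π) ^ (-(w + 1)) * Gamma (w + 1) * cos (π * (w + 1) / 2) *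
          riemannZeta (w + 1) := riemannZeta_one_sub hsucc (by simpa using hw0)
    _ = _ := by rw [hcos, hcpow, Gamma_add_one w hw0]; ring

lemma riemannZeta_neg_div_riemannZeta_one_sub {w : ℂ} (hw : ∀ n : ℕ, w ≠ -n) (hw' : w ≠ 1) :
    riemannZeta (-w) / riemannZeta (1 - w) =
      -(w / (2 * π)) * tan (π * w / 2) * (riemannZeta (w + 1) / riemannZeta w) := by
  have hcpow : (2 * π : ℂ) ^ (-w) ≠ 0 := by simp [cpow_eq_zero_iff, Real.pi_ne_zero]
  have hcommon : 2 * (2 * π : ℂ) ^ (-w) * Gamma w ≠ 0 := by simp [hcpow, Gamma_ne_zero hw]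
  rw [riemannZeta_neg hw, riemannZeta_one_sub hw hw', Complex.tan]
  calc
    _ = (2 * (2 * π : ℂ) ^ (-w) * Gamma w) *
          (-(w / (2 * π)) * sin (π * w / 2) * riemannZeta (w + 1)) /
        ((2 * (2 * π : ℂ) ^ (-w) * Gamma w) * (cos (π * w / 2) * riemannZeta w)) := by ring
    _ = _ := by rw [mul_div_mul_left _ _ hcommon]; ring

lemma norm_tan_mul_I_add_int_mul_pi_lt_one (y : ℝ) (n : ℤ) : ‖tan (y * I + n * π)‖ < 1 := by
  rw [Complex.tan_add_int_mul_pi, Complex.tan_mul_I, norm_mul, norm_I, mul_one, ← ofReal_tanh,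
    norm_real, Real.norm_eq_abs]
  exact Real.abs_tanh_lt_one y

lemma norm_riemannZeta_neg_div_riemannZeta_one_sub_le {w : ℂ} {n : ℕ} (hn : n ≠ 0)
    (hw : w.re = 2 * n) : ‖riemannZeta (-w) / riemannZeta (1 - w)‖ ≤ ‖w‖ := by
  have htwo : 2 ≤ w.re := by
    rw [hw]
    exact_mod_cast Nat.le_mul_of_pos_right 2 (Nat.pos_of_ne_zero hn)
  have hneg (m : ℕ) : w ≠ -m := fun h => by
    have : w.re = -m := by simp [h]
    linarith [m.cast_nonneg (α := ℝ)]
  have hone : w ≠ 1 := fun h => by norm_num [h] at htwo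
  have htan : ‖tan (π * w / 2)‖ ≤ 1 := by
    have harg : π * w / 2 = (π * w.im / 2 : ℝ) * I + (n : ℤ) * π := by
      conv_lhs => rw [← re_add_im w, hw]
      push_cast
      ring
    rw [harg]
    exact (norm_tan_mul_I_add_int_mul_pi_lt_one _ _).le
  have hzeta : ‖riemannZeta (w + 1) / riemannZeta w‖ ≤ 5 :=
    norm_riemannZeta_div_riemannZeta_le (by rw [add_re, one_re]; linarith) htwo
  have hpi : ‖(2 * π : ℂ)‖ = 2 * π := by simp [abs_of_pos Real.pi_pos]
  calc ‖riemannZeta (-w) / riemannZeta (1 - w)‖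
      = ‖w‖ / (2 * π) * ‖tan (π * w / 2)‖ * ‖riemannZeta (w + 1) / riemannZeta w‖ := by
        rw [riemannZeta_neg_div_riemannZeta_one_sub hneg hone, norm_mul, norm_mul, norm_neg,
          norm_div, hpi]
    _ ≤ ‖w‖ / (2 * π) * 1 * (2 * π) := by
        gcongr
        linarith [Real.pi_gt_three]
    _ = ‖w‖ := by field_simp

lemma norm_riemannZeta_ratio_mul_cpow_div_pow_le (k : ℕ) {x : ℝ} (hx : 0 < x) {s : ℂ} {M : ℕ}
    (hs : s.re = -(2 * M + 1)) :
    ‖riemannZeta (s - 1) / riemannZeta s * (x : ℂ) ^ s / s ^ k‖ ≤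
      ‖1 - s‖ * x⁻¹ ^ (2 * M + 1) := by
  have hratio : ‖riemannZeta (s - 1) / riemannZeta s‖ ≤ ‖1 - s‖ := by
    have hre : (1 - s).re = 2 * (M + 1 : ℕ) := by
      rw [sub_re, one_re, hs]
      push_cast
      ring
    simpa using norm_riemannZeta_neg_div_riemannZeta_one_sub_le M.succ_ne_zero hre
  have hone : 1 ≤ ‖s‖ := by
    have := neg_le_of_abs_le (abs_re_le_norm s)
    linarith [M.cast_nonneg (α := ℝ)]
  have hcpow : ‖(x : ℂ) ^ s‖ = x⁻¹ ^ (2 * M + 1) := by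
    rw [norm_cpow_eq_rpow_re_of_pos hx, hs, Real.rpow_neg hx.le, inv_pow]
    exact_mod_cast congrArg (·⁻¹) (Real.rpow_natCast x (2 * M + 1))
  rw [norm_div, norm_mul, hcpow, norm_pow]
  refine (div_le_self (by positivity) (one_le_pow₀ hone)).trans ?_
  gcongr

lemma norm_riemannZeta_ratio_mul_cpow_div_pow_segment_le (k : ℕ) {x : ℝ} (hx : 0 < x) (M : ℕ)
    {a b t : ℝ} (ht : t ∈ Set.uIoc a b) :
    ‖(fun s : ℂ => riemannZeta (s - 1) / riemannZeta s * (x : ℂ) ^ s / s ^ k)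
        (-(2 * (M : ℂ) + 1) + t * I)‖ ≤
      ((2 * M + 1 : ℕ) + (1 + max |a| |b|)) * x⁻¹ ^ (2 * M + 1) := by
  have ht' : |t| ≤ max |a| |b| := by
    rcases Set.mem_uIoc.mp ht with h | h
    · exact abs_le_max_abs_abs h.1.le h.2
    · exact (abs_le_max_abs_abs h.1.le h.2).trans_eq (max_comm _ _)
  have hs : (-(2 * (M : ℂ) + 1) + t * I).re = -(2 * M + 1) := by simp
  have hdist : ‖1 - (-(2 * (M : ℂ) + 1) + t * I)‖ ≤ (2 * M + 1 : ℕ) + (1 + max |a| |b|) := by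
    refine (norm_le_abs_re_add_abs_im _).trans ?_
    have hre : (1 - (-(2 * (M : ℂ) + 1) + t * I)).re = (2 * M + 1 : ℕ) + 1 := by
      rw [sub_re, one_re, hs]
      push_cast
      ring
    have him : (1 - (-(2 * (M : ℂ) + 1) + t * I)).im = -t := by simp
    rw [hre, him, abs_neg, abs_of_nonneg (by positivity)]
    linarith
  refine (norm_riemannZeta_ratio_mul_cpow_div_pow_le k hx hs).trans ?_
  gcongr

lemma tendsto_natCast_add_mul_pow_atTop_nhds_zero (c : ℝ) {r : ℝ} (hr : |r| < 1) :
    Tendsto (fun n : ℕ => (n + c) * r ^ n) atTop (𝓝 0) := by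
  simpa only [add_mul, mul_zero, add_zero] using
    (tendsto_self_mul_const_pow_of_abs_lt_one hr).add
      ((tendsto_pow_atTop_nhds_zero_of_abs_lt_one hr).const_mul c)

theorem left_segment_integral_tendsto_zero_general (k : ℕ) {x : ℝ} (hx : 1 < x) (a b : ℝ) :
    Tendsto
      (fun M : ℕ =>
        I * ∫ t in a..b,
          (fun s : ℂ => riemannZeta (s - 1) / riemannZeta s * (x : ℂ) ^ s / s ^ k)
            (-(2 * (M : ℂ) + 1) + t * I))
      atTop (𝓝 0) := by
  have hodd : Tendsto (fun M : ℕ => 2 * M + 1) atTop atTop :=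
    tendsto_atTop_mono (fun M => show M ≤ 2 * M + 1 by lia) tendsto_id
  have hinv : |x⁻¹| < 1 := by
    rw [abs_of_pos (by positivity)]
    exact inv_lt_one_of_one_lt₀ hx
  have hlim := ((tendsto_natCast_add_mul_pow_atTop_nhds_zero (1 + max |a| |b|) hinv).comp
    hodd).mul_const |b - a|
  rw [zero_mul] at hlim
  refine squeeze_zero_norm (fun M => ?_) hlim
  rw [norm_mul, norm_I, one_mul]
  exact norm_integral_le_of_norm_le_const fun t ht =>
    norm_riemannZeta_ratio_mul_cpow_div_pow_segment_le k (by positivity) M ht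

theorem left_segment_integral_tendsto_zero
    (k : ℕ) (hk : 2 ≤ k) (x T : ℝ) (hx : 2 ≤ x) (hT : 1 ≤ T) :
    Tendsto
      (fun M : ℕ =>
        I * ∫ t in (-T)..T,
          (fun s : ℂ => riemannZeta (s - 1) / riemannZeta s * (x : ℂ) ^ s / s ^ k)
            (-(2 * (M : ℂ) + 1) + t * I))
      atTop (𝓝 0) :=
  left_segment_integral_tendsto_zero_general k (by linarith) (-T) T
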